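/- Define R_t^N(α) := Q_t^N(α)/((Q_0^N(α))^{1−t}·(Q_1^N(α))^{t}). There exists a constant C > 0 such that 1/C ≤ R_t^N(α) ≤ C for every integer N ≥ 1, every t ∈ [0,1], and every α ∈ [0,1]; moreover R_t^N(α) → Ω_t(α)/((Ω_0(α))^{1−t}·(Ω_1(α))^{t}) as N → ∞, uniformly in (t,α) ∈ [0,1] × [0,1]. -/

import Mathlib

open Set Filter

noncomputable def GP : ℝ → ℝ := fun x => x * Real.log x + (1 - x) * Real.log (1 - x)

noncomputable def Gt (f0 f1 : ℝ → ℝ) (t : ℝ) : ℝ → ℝ :=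
  fun x => GP x + ((1 - t) * f0 x + t * f1 x)

noncomputable def Phase (G : ℝ → ℝ) (α : ℝ) : ℝ → ℝ :=
  fun x => (x - α) * deriv G x - (G x - G α)

noncomputable def Qnorm (G : ℝ → ℝ) (N : ℕ) (α : ℝ) : ℝ :=
  2 * Real.pi * ∫ x in (0:ℝ)..1, Real.exp (-(N : ℝ) * Phase G α x)

noncomputable def RPhase (G : ℝ → ℝ) (α : ℝ) : ℝ → ℝ :=
  fun y => (1 / α) * Phase G α (α * (1 + y))

noncomputable def Leg (G : ℝ → ℝ) (S : Set ℝ) : ℝ → ℝ :=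
  fun ρ => sSup ((fun x => x * ρ - G x) '' S)

noncomputable def QQ (G : ℝ → ℝ) (N : ℕ) (α : ℝ) : ℝ :=
  Qnorm G N α * Real.exp ((N : ℝ) * G α)

noncomputable def Omg (f0 f1 : ℝ → ℝ) (t α : ℝ) : ℝ :=
  if α = 0 ∨ α = 1 then 1
  else (iteratedDeriv 2 GP α / iteratedDeriv 2 (Gt f0 f1 t) α) ^ ((1:ℝ)/2)

noncomputable def Rcal (f0 f1 : ℝ → ℝ) (N : ℕ) (t α : ℝ) : ℝ :=
  Qnorm (Gt f0 f1 t) N α /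
    ((Qnorm (Gt f0 f1 0) N α) ^ (1 - t) * (Qnorm (Gt f0 f1 1) N α) ^ t)

/-- The model phase of `GP`. -/
noncomputable def DD (α x : ℝ) : ℝ := -α * Real.log x - (1 - α) * Real.log (1 - x) + GP α

/-- The full phase for `GP + f`, with `g = f'`. -/
noncomputable def FF (f g : ℝ → ℝ) (α x : ℝ) : ℝ := DD α x + ((x - α) * g x - (f x - f α))

structure PH (α : ℝ) (F k : ℝ → ℝ) : Prop where
  zero : F α = 0
  cont : ContinuousAt F α
  der : ∀ y ∈ Ioo (0:ℝ) 1, HasDerivAt F ((y - α) * k y) y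

theorem PH.smul {α : ℝ} {F k : ℝ → ℝ} (h : PH α F k) (c : ℝ) :
    PH α (fun x => c * F x) (fun x => c * k x) := by
  refine ⟨by simp [h.zero], h.cont.const_mul c, fun y hy => ?_⟩
  have := (h.der y hy).const_mul c
  refine HasDerivAt.congr_deriv this ?_
  ring

theorem DD_self {α : ℝ} : DD α α = 0 := by
  unfold DD GP; ring

theorem PH_DD {α : ℝ} (hα : α ∈ Icc (0:ℝ) 1) : PH α (DD α) (fun x => 1 / (x * (1 - x))) := by
  have hd : ∀ y ∈ Ioo (0:ℝ) 1, HasDerivAt (DD α) ((y - α) * (1 / (y * (1 - y)))) y := by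
    intro y hy
    have h0 : y ≠ 0 := hy.1.ne'
    have h1 : 1 - y ≠ 0 := (sub_pos.2 hy.2).ne'
    have e1 := (Real.hasDerivAt_log h0).const_mul (-α)
    have e2 := (((hasDerivAt_id y).const_sub 1).log h1).const_mul (1 - α)
    have := (e1.sub e2).add_const (GP α)
    refine HasDerivAt.congr_deriv this ?_
    simp only [id]
    field_simp
    ring
  refine ⟨DD_self, ?_, hd⟩
  rcases eq_or_lt_of_le hα.1 with h | h
  · subst h
    have : DD 0 = fun x => - Real.log (1 - x) + GP 0 := by
      funext x; simp [DD]
    rw [this]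
    have : ContinuousAt (fun x : ℝ => Real.log (1 - x)) 0 :=
      ContinuousAt.log (by fun_prop) (by norm_num)
    exact this.neg.add continuousAt_const
  rcases eq_or_lt_of_le hα.2 with h' | h'
  · subst h'
    have : DD 1 = fun x => - Real.log x + GP 1 := by
      funext x; simp [DD]
    rw [this]
    have : ContinuousAt (fun x : ℝ => Real.log x) 1 :=
      ContinuousAt.log (by fun_prop) (by norm_num)
    exact this.neg.add continuousAt_const
  · exact (hd α ⟨h, h'⟩).continuousAt

theorem PH_FF {α : ℝ} (hα : α ∈ Icc (0:ℝ) 1) {f f1 f2 : ℝ → ℝ}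
    (h1 : ∀ x, HasDerivAt f (f1 x) x) (h2 : ∀ x, HasDerivAt f1 (f2 x) x) :
    PH α (FF f f1 α) (fun x => 1 / (x * (1 - x)) + f2 x) := by
  have hP := PH_DD hα
  have hd : ∀ y, HasDerivAt (fun x => (x - α) * f1 x - (f x - f α)) ((y - α) * f2 y) y := by
    intro y
    have := (((hasDerivAt_id y).sub_const α).mul (h2 y)).sub ((h1 y).sub_const (f α))
    refine HasDerivAt.congr_deriv this ?_
    simp
  refine ⟨by simp [FF, DD_self], hP.cont.add (hd α).continuousAt, fun y hy => ?_⟩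
  have := (hP.der y hy).add (hd y)
  refine HasDerivAt.congr_deriv this ?_
  ring

/-- comparison of phases after scaling -/
theorem PH_le {α η s : ℝ} (hα : α ∈ Icc (0:ℝ) 1) (hs : 0 < s) {A B kA kB : ℝ → ℝ}
    (hA : PH α A kA) (hB : PH α B kB)
    (H : ∀ y ∈ Ioo (0:ℝ) 1, |y - α| ≤ η → α + (y - α) / s ∈ Ioo (0:ℝ) 1 ∧
      kA y ≤ kB (α + (y - α) / s) / s ^ 2) {x : ℝ} (hx : x ∈ Ioo (0:ℝ) 1) (hxη : |x - α| ≤ η) :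
    A x ≤ B (α + (x - α) / s) := by
  set φ : ℝ → ℝ := fun y => B (α + (y - α) / s) - A y with hφ
  have hin : ∀ y ∈ uIcc α x, y ≠ α → y ∈ Ioo (0:ℝ) 1 ∧ |y - α| ≤ η := by
    intro y hy hne
    rcases le_total α x with h | h
    · rw [uIcc_of_le h] at hy
      have h3 : α < y := lt_of_le_of_ne hy.1 (Ne.symm hne)
      refine ⟨⟨lt_of_le_of_lt hα.1 h3, lt_of_le_of_lt hy.2 hx.2⟩, ?_⟩
      rw [abs_of_pos (by linarith)]
      have := le_abs_self (x - α)
      linarith [hy.2]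
    · rw [uIcc_of_ge h] at hy
      have h3 : y < α := lt_of_le_of_ne hy.2 hne
      refine ⟨⟨lt_of_lt_of_le hx.1 hy.1, lt_of_lt_of_le h3 hα.2⟩, ?_⟩
      rw [abs_of_neg (by linarith)]
      have := neg_le_abs (x - α)
      linarith [hy.1]
  have hd : ∀ y ∈ uIcc α x, y ≠ α →
      HasDerivAt φ ((y - α) * (kB (α + (y - α) / s) / s ^ 2 - kA y)) y := by
    intro y hy hne
    obtain ⟨h1, h2⟩ := hin y hy hne
    obtain ⟨h3, _⟩ := H y h1 h2
    have e : HasDerivAt (fun y => α + (y - α) / s) (1 / s) y :=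
      (((hasDerivAt_id y).sub_const α).div_const s).const_add α
    have := ((hB.der _ h3).comp y e).sub (hA.der y h1)
    refine HasDerivAt.congr_deriv this ?_
    field_simp
    ring
  have hc : ContinuousOn φ (uIcc α x) := by
    intro y hy
    by_cases hne : y = α
    · subst hne
      have h1 : ContinuousAt (fun z => B (y + (z - y) / s)) y := by
        apply ContinuousAt.comp (g := B) (f := fun z => y + (z - y) / s)
        · simpa using hB.cont
        · fun_prop
      exact (h1.sub hA.cont).continuousWithinAt
    · exact (hd y hy hne).continuousAt.continuousWithinAt
  have h0 : φ α = 0 := by simp [hφ, hA.zero, hB.zero]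
  suffices 0 ≤ φ x by simpa [hφ] using this
  rcases le_total α x with h | h
  · rw [uIcc_of_le h] at *
    have : MonotoneOn φ (Icc α x) := by
      apply monotoneOn_of_deriv_nonneg (convex_Icc _ _) hc
      · intro y hy
        rw [interior_Icc] at hy
        exact (hd y ⟨hy.1.le, hy.2.le⟩ hy.1.ne').differentiableAt.differentiableWithinAt
      · intro y hy
        rw [interior_Icc] at hy
        obtain ⟨h1, h2⟩ := hin y ⟨hy.1.le, hy.2.le⟩ hy.1.ne'
        rw [(hd y ⟨hy.1.le, hy.2.le⟩ hy.1.ne').deriv]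
        exact mul_nonneg (by linarith [hy.1]) (by linarith [(H y h1 h2).2])
    have := this ⟨le_refl _, h⟩ ⟨h, le_refl _⟩ h
    linarith
  · rw [uIcc_of_ge h] at *
    have : AntitoneOn φ (Icc x α) := by
      apply antitoneOn_of_deriv_nonpos (convex_Icc _ _) hc
      · intro y hy
        rw [interior_Icc] at hy
        exact (hd y ⟨hy.1.le, hy.2.le⟩ hy.2.ne).differentiableAt.differentiableWithinAt
      · intro y hy
        rw [interior_Icc] at hy
        obtain ⟨h1, h2⟩ := hin y ⟨hy.1.le, hy.2.le⟩ hy.2.ne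
        rw [(hd y ⟨hy.1.le, hy.2.le⟩ hy.2.ne).deriv]
        exact mul_nonpos_of_nonpos_of_nonneg (by linarith [hy.2]) (by linarith [(H y h1 h2).2])
    have := this ⟨le_refl _, h⟩ ⟨h, le_refl _⟩ h
    linarith

theorem PH_ge {α η s : ℝ} (hα : α ∈ Icc (0:ℝ) 1) (hs : 0 < s) {A B kA kB : ℝ → ℝ}
    (hA : PH α A kA) (hB : PH α B kB)
    (H : ∀ y ∈ Ioo (0:ℝ) 1, |y - α| ≤ η → α + (y - α) / s ∈ Ioo (0:ℝ) 1 ∧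
      kB (α + (y - α) / s) / s ^ 2 ≤ kA y) {x : ℝ} (hx : x ∈ Ioo (0:ℝ) 1) (hxη : |x - α| ≤ η) :
    B (α + (x - α) / s) ≤ A x := by
  have := PH_le hα hs (hA.smul (-1)) (hB.smul (-1)) (η := η) (fun y hy hyη => ⟨(H y hy hyη).1, by
    have := (H y hy hyη).2
    rw [mul_div_assoc]; linarith⟩) hx hxη
  linarith

theorem abs_sub_le_one {α x : ℝ} (hα : α ∈ Icc (0:ℝ) 1) (hx : x ∈ Ioo (0:ℝ) 1) : |x - α| ≤ 1 := by
  rw [abs_le]; constructor <;> linarith [hα.1, hα.2, hx.1, hx.2]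

theorem PH_quad (α : ℝ) : PH α (fun x => 2 * (x - α) ^ 2) (fun _ => 4) := by
  refine ⟨by simp, by fun_prop, fun y _ => ?_⟩
  have := ((((hasDerivAt_id y).sub_const α).pow 2).const_mul 2)
  refine HasDerivAt.congr_deriv this ?_
  simp; ring

theorem DD_ge {α x : ℝ} (hα : α ∈ Icc (0:ℝ) 1) (hx : x ∈ Ioo (0:ℝ) 1) :
    2 * (x - α) ^ 2 ≤ DD α x := by
  have := PH_le (η := 1) (s := 1) hα one_pos (PH_quad α) (PH_DD hα) (fun y hy _ => ⟨by simpa using hy, by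
    have : 0 < y * (1 - y) := mul_pos hy.1 (sub_pos.2 hy.2)
    have e : α + (y - α) / 1 = y := by ring
    rw [e, one_pow, div_one, le_div_iff₀ this]
    nlinarith [sq_nonneg (1 - 2 * y)]⟩) hx (abs_sub_le_one hα hx)
  simpa using this

theorem DD_nonneg {α x : ℝ} (hα : α ∈ Icc (0:ℝ) 1) (hx : x ∈ Ioo (0:ℝ) 1) : 0 ≤ DD α x :=
  le_trans (by positivity) (DD_ge hα hx)

theorem scale_mem {α x c : ℝ} (hα : α ∈ Icc (0:ℝ) 1) (hx : x ∈ Ioo (0:ℝ) 1) (hc : 1 ≤ c) :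
    α + (x - α) / c ∈ Ioo (0:ℝ) 1 := by
  have hc0 : 0 < c := by linarith
  have e : α + (x - α) / c = ((c - 1) * α + x) / c := by field_simp; ring
  rw [e]
  constructor
  · apply div_pos _ hc0
    have := mul_nonneg (sub_nonneg.2 hc) hα.1
    linarith [hx.1]
  · rw [div_lt_one hc0]
    have := mul_le_mul_of_nonneg_left hα.2 (sub_nonneg.2 hc)
    linarith [hx.2]

theorem DD_scale {α x c : ℝ} (hα : α ∈ Icc (0:ℝ) 1) (hx : x ∈ Ioo (0:ℝ) 1) (hc : 1 ≤ c) :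
    c * DD α (α + (x - α) / c) ≤ DD α x := by
  have hc0 : 0 < c := by linarith
  have := PH_ge (η := 1) (s := c) hα hc0 (PH_DD hα) ((PH_DD hα).smul c) (fun y hy _ => ⟨scale_mem hα hy hc, by
    have h1 : 0 < y * (1 - y) := mul_pos hy.1 (sub_pos.2 hy.2)
    have hm := scale_mem hα hy hc
    have h2 : 0 < (α + (y - α) / c) * (1 - (α + (y - α) / c)) := mul_pos hm.1 (sub_pos.2 hm.2)
    have h3 : y * (1 - y) ≤ c * ((α + (y - α) / c) * (1 - (α + (y - α) / c))) := by
      have e : c * ((α + (y - α) / c) * (1 - (α + (y - α) / c))) - y * (1 - y)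
        = (1 - 1 / c) * (c * (α * (1 - α)) + (y - α) ^ 2) := by field_simp; ring
      have : 0 ≤ (1 - 1 / c) := by
        rw [sub_nonneg, div_le_one hc0]; exact hc
      have h4 : 0 ≤ α * (1 - α) := mul_nonneg hα.1 (sub_nonneg.2 hα.2)
      have : 0 ≤ (1 - 1 / c) * (c * (α * (1 - α)) + (y - α) ^ 2) := by positivity
      linarith
    set z := α + (y - α) / c
    have e : c * (1 / (z * (1 - z))) / c ^ 2 = 1 / (c * (z * (1 - z))) := by
      field_simp
    rw [e]
    exact one_div_le_one_div_of_le h1 h3⟩) hx (abs_sub_le_one hα hx)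
  exact this

/-- integrand, extended by zero -/
noncomputable def EE (l : ℝ) (F : ℝ → ℝ) : ℝ → ℝ :=
  (Ioo (0:ℝ) 1).indicator (fun x => Real.exp (-l * F x))

noncomputable def II (l : ℝ) (F : ℝ → ℝ) : ℝ := ∫ x, EE l F x

theorem EE_of_mem {l : ℝ} {F : ℝ → ℝ} {x : ℝ} (hx : x ∈ Ioo (0:ℝ) 1) :
    EE l F x = Real.exp (-l * F x) := by simp only [EE, indicator_of_mem hx]

theorem EE_of_notMem {l : ℝ} {F : ℝ → ℝ} {x : ℝ} (hx : x ∉ Ioo (0:ℝ) 1) :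
    EE l F x = 0 := by simp only [EE, indicator_of_notMem hx]

theorem EE_nonneg {l : ℝ} {F : ℝ → ℝ} (x : ℝ) : 0 ≤ EE l F x :=
  indicator_nonneg (fun _ _ => (Real.exp_pos _).le) x

/-- The constant indicator of the unit interval. -/
noncomputable def chi : ℝ → ℝ := (Ioo (0:ℝ) 1).indicator (fun _ => 1)

theorem chi_integrable : MeasureTheory.Integrable chi := by
  unfold chi
  rw [MeasureTheory.integrable_indicator_iff measurableSet_Ioo]
  exact MeasureTheory.integrableOn_const (by simp)

theorem chi_integral : ∫ x, chi x = 1 := by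
  unfold chi
  rw [MeasureTheory.integral_indicator measurableSet_Ioo]
  simp

theorem chi_nonneg (x : ℝ) : 0 ≤ chi x := indicator_nonneg (fun _ _ => zero_le_one) x

theorem EE_integrable {l : ℝ} (hl : 0 ≤ l) {F : ℝ → ℝ} (hF : Measurable F)
    (hF0 : ∀ x ∈ Ioo (0:ℝ) 1, 0 ≤ F x) : MeasureTheory.Integrable (EE l F) := by
  apply MeasureTheory.Integrable.mono' chi_integrable
  · exact ((by fun_prop : Measurable (fun x => Real.exp (-l * F x))).indicator
      measurableSet_Ioo).aestronglyMeasurable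
  · refine Eventually.of_forall fun x => ?_
    rw [Real.norm_of_nonneg (EE_nonneg x)]
    by_cases hx : x ∈ Ioo (0:ℝ) 1
    · rw [EE_of_mem hx, chi, indicator_of_mem hx, Real.exp_le_one_iff]
      have := mul_nonneg hl (hF0 x hx)
      linarith
    · rw [EE_of_notMem hx]; exact chi_nonneg x

theorem DD_measurable (α : ℝ) : Measurable (DD α) := by
  unfold DD
  have := Real.measurable_log
  fun_prop

theorem FF_measurable (α : ℝ) {f g : ℝ → ℝ} (hf : Continuous f) (hg : Continuous g) :
    Measurable (FF f g α) := by
  unfold FF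
  exact (DD_measurable α).add (by fun_prop : Continuous fun x => (x - α) * g x - (f x - f α)).measurable

theorem DDE_integrable {l α : ℝ} (hα : α ∈ Icc (0:ℝ) 1) (hl : 0 ≤ l) :
    MeasureTheory.Integrable (EE l (DD α)) :=
  EE_integrable hl (DD_measurable α) (fun _ hx => DD_nonneg hα hx)

theorem scale_integrable {u : ℝ → ℝ} (hu : MeasureTheory.Integrable u) {s : ℝ} (hs : 0 < s) (α : ℝ) :
    MeasureTheory.Integrable (fun x => u (α + (x - α) / s)) := by
  have := (hu.comp_add_left α).comp_div hs.ne'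
  exact this.comp_sub_right α

theorem scale_integral (u : ℝ → ℝ) {s : ℝ} (hs : 0 < s) (α : ℝ) :
    ∫ x, u (α + (x - α) / s) = s * ∫ x, u x := by
  rw [MeasureTheory.integral_sub_right_eq_self (fun x => u (α + x / s)) α,
    MeasureTheory.Measure.integral_comp_div (fun x => u (α + x)) s,
    MeasureTheory.integral_add_left_eq_self u α, abs_of_pos hs, smul_eq_mul]

theorem II_anti {l l' α : ℝ} (hα : α ∈ Icc (0:ℝ) 1) (hl : 0 ≤ l) (h : l ≤ l') :
    II l' (DD α) ≤ II l (DD α) := by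
  apply MeasureTheory.integral_mono (DDE_integrable hα (hl.trans h)) (DDE_integrable hα hl)
  intro x
  by_cases hx : x ∈ Ioo (0:ℝ) 1
  · simp only [EE_of_mem hx]
    apply Real.exp_le_exp.2
    have := mul_le_mul_of_nonneg_right h (DD_nonneg hα hx)
    linarith
  · simp only [EE_of_notMem hx]; exact le_refl _

theorem II_scale {l c α : ℝ} (hα : α ∈ Icc (0:ℝ) 1) (hl : 0 ≤ l) (hc : 1 ≤ c) :
    II l (DD α) ≤ c * II (l * c) (DD α) := by
  have hc0 : 0 < c := by linarith
  have hi := DDE_integrable hα (l := l * c) (by positivity)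
  unfold II
  rw [← scale_integral _ hc0 α]
  apply MeasureTheory.integral_mono (DDE_integrable hα hl) (scale_integrable hi hc0 α)
  intro x
  by_cases hx : x ∈ Ioo (0:ℝ) 1
  · simp only [EE_of_mem hx, EE_of_mem (scale_mem hα hx hc)]
    apply Real.exp_le_exp.2
    have := mul_le_mul_of_nonneg_left (DD_scale hα hx hc) hl
    linarith
  · simp only [EE_of_notMem hx]; exact EE_nonneg _

theorem II_one {α : ℝ} (hα : α ∈ Icc (0:ℝ) 1) : 1 / 6 ≤ II 1 (DD α) := by
  have h1 : ∫ x in (0:ℝ)..1, x * (1 - x) = 1 / 6 := by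
    have : ∀ x : ℝ, x * (1 - x) = x - x ^ 2 := fun x => by ring
    simp only [this]
    rw [intervalIntegral.integral_sub (Continuous.intervalIntegrable (by fun_prop) _ _)
      (Continuous.intervalIntegrable (by fun_prop) _ _)]
    simp; norm_num
  rw [← h1, intervalIntegral.integral_of_le zero_le_one, MeasureTheory.integral_Ioc_eq_integral_Ioo,
    ← MeasureTheory.integral_indicator measurableSet_Ioo]
  apply MeasureTheory.integral_mono _ (DDE_integrable hα zero_le_one)
  · intro x
    by_cases hx : x ∈ Ioo (0:ℝ) 1
    · simp only [EE_of_mem hx, indicator_of_mem hx]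
      have h0 : 0 < 1 - x := sub_pos.2 hx.2
      have e : x * (1 - x) = Real.exp (Real.log x + Real.log (1 - x)) := by
        rw [Real.exp_add, Real.exp_log hx.1, Real.exp_log h0]
      rw [e]
      apply Real.exp_le_exp.2
      unfold DD GP
      have a1 : Real.log x ≤ 0 := Real.log_nonpos hx.1.le hx.2.le
      have a2 : Real.log (1 - x) ≤ 0 := Real.log_nonpos h0.le (by linarith [hx.1])
      have a3 : Real.log α ≤ 0 := Real.log_nonpos hα.1 hα.2
      have a4 : Real.log (1 - α) ≤ 0 := Real.log_nonpos (by linarith [hα.2]) (by linarith [hα.1])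
      have b0 : 0 ≤ 1 - α := by linarith [hα.2]
      have := mul_nonneg_of_nonpos_of_nonpos a1 (neg_nonpos.2 b0)
      have := mul_nonneg_of_nonpos_of_nonpos a2 (neg_nonpos.2 hα.1)
      have := mul_nonneg_of_nonpos_of_nonpos a3 (neg_nonpos.2 hα.1)
      have := mul_nonneg_of_nonpos_of_nonpos a4 (neg_nonpos.2 b0)
      linarith
    · simp only [EE_of_notMem hx, indicator_of_notMem hx]; exact le_refl _
  · rw [MeasureTheory.integrable_indicator_iff measurableSet_Ioo]
    exact ((by fun_prop : Continuous fun x : ℝ => x * (1 - x)).integrableOn_Icc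
      (a := 0) (b := 1)).mono_set Ioo_subset_Icc_self

theorem II_lower {l α : ℝ} (hα : α ∈ Icc (0:ℝ) 1) (hl : 1 ≤ l) : 1 / (6 * l) ≤ II l (DD α) := by
  have := II_scale hα zero_le_one hl
  rw [one_mul] at this
  have h1 := II_one hα
  rw [div_le_iff₀ (by positivity)]
  linarith

theorem II_pos {l α : ℝ} (hα : α ∈ Icc (0:ℝ) 1) (hl : 1 ≤ l) : 0 < II l (DD α) :=
  lt_of_lt_of_le (by positivity) (II_lower hα hl)

theorem II_bounds {l a b α : ℝ} (hα : α ∈ Icc (0:ℝ) 1) (hl : 0 ≤ l) {F : ℝ → ℝ}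
    (hF : Measurable F) (ha : 0 < a) (ha1 : a ≤ 1) (hb : 1 ≤ b)
    (h : ∀ x ∈ Ioo (0:ℝ) 1, a * DD α x ≤ F x ∧ F x ≤ b * DD α x) :
    II l (DD α) / b ≤ II l F ∧ II l F ≤ II l (DD α) / a := by
  have hFi : MeasureTheory.Integrable (EE l F) := EE_integrable hl hF
    (fun x hx => (mul_nonneg ha.le (DD_nonneg hα hx)).trans (h x hx).1)
  constructor
  · rw [div_le_iff₀ (by linarith), mul_comm]
    refine (II_scale hα hl hb).trans ?_
    gcongr
    apply MeasureTheory.integral_mono (DDE_integrable hα (by positivity)) hFi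
    intro x
    by_cases hx : x ∈ Ioo (0:ℝ) 1
    · simp only [EE_of_mem hx]
      apply Real.exp_le_exp.2
      have := mul_le_mul_of_nonneg_left (h x hx).2 hl
      linarith
    · simp only [EE_of_notMem hx]; exact le_refl _
  · have h1 := II_scale (l := l * a) (c := 1 / a) hα (by positivity) ((one_le_div ha).2 ha1)
    have e : l * a * (1 / a) = l := by field_simp
    rw [e] at h1
    have e2 : 1 / a * II l (DD α) = II l (DD α) / a := by ring
    rw [← e2]
    refine le_trans ?_ h1
    apply MeasureTheory.integral_mono hFi (DDE_integrable hα (by positivity))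
    intro x
    by_cases hx : x ∈ Ioo (0:ℝ) 1
    · simp only [EE_of_mem hx]
      apply Real.exp_le_exp.2
      have := mul_le_mul_of_nonneg_left (h x hx).1 hl
      linarith
    · simp only [EE_of_notMem hx]; exact le_refl _

/-- local comparison plus tail bound -/
theorem II_local {l m δ η s α : ℝ} (hα : α ∈ Icc (0:ℝ) 1) (hl : 0 ≤ l) {F : ℝ → ℝ}
    (hF : Measurable F) (hm : 0 < m) (hδ : 0 < δ) (hδ1 : δ < 1) (hs : 0 < s) (hη : 0 < η)
    (hFm : ∀ x ∈ Ioo (0:ℝ) 1, m * DD α x ≤ F x)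
    (hloc : ∀ x ∈ Ioo (0:ℝ) 1, |x - α| ≤ η → α + (x - α) / s ∈ Ioo (0:ℝ) 1 ∧
      (1 - δ) * DD α x ≤ F (α + (x - α) / s) ∧ F (α + (x - α) / s) ≤ (1 + δ) * DD α x)
    (hin : ∀ x, α + (x - α) / s ∈ Ioo (0:ℝ) 1 → |x - α| ≤ η → x ∈ Ioo (0:ℝ) 1) :
    II l (DD α) / (1 + δ) - Real.exp (-l * (2 * η ^ 2)) ≤ s * II l F ∧
    s * II l F ≤ II l (DD α) / (1 - δ) + s * Real.exp (-l * (m * (2 * (η / s) ^ 2))) := by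
  have hFi : MeasureTheory.Integrable (EE l F) := EE_integrable hl hF
    (fun x hx => (mul_nonneg hm.le (DD_nonneg hα hx)).trans (hFm x hx))
  have hus := scale_integrable hFi hs α
  have e0 : s * II l F = ∫ x, EE l F (α + (x - α) / s) := (scale_integral _ hs α).symm
  constructor
  · have h1 : II l (DD α) / (1 + δ) ≤ II (l * (1 + δ)) (DD α) := by
      rw [div_le_iff₀ (by linarith), mul_comm]
      exact II_scale hα hl (by linarith)
    have h2 : II (l * (1 + δ)) (DD α) ≤
        ∫ x, (EE l F (α + (x - α) / s) + Real.exp (-l * (2 * η ^ 2)) * chi x) := by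
      apply MeasureTheory.integral_mono (DDE_integrable hα (by positivity))
        (hus.add (chi_integrable.const_mul _))
      intro x
      change EE (l * (1 + δ)) (DD α) x ≤
        EE l F (α + (x - α) / s) + Real.exp (-l * (2 * η ^ 2)) * chi x
      by_cases hx : x ∈ Ioo (0:ℝ) 1
      · simp only [EE_of_mem hx]
        rcases le_or_gt (|x - α|) η with hxη | hxη
        · obtain ⟨g1, g2, g3⟩ := hloc x hx hxη
          rw [EE_of_mem g1]
          have : Real.exp (-(l * (1 + δ)) * DD α x) ≤ Real.exp (-l * F (α + (x - α) / s)) := by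
            apply Real.exp_le_exp.2
            have := mul_le_mul_of_nonneg_left g3 hl
            linarith
          have := mul_nonneg (Real.exp_pos (-l * (2 * η ^ 2))).le (chi_nonneg x)
          linarith
        · have : Real.exp (-(l * (1 + δ)) * DD α x) ≤ Real.exp (-l * (2 * η ^ 2)) := by
            apply Real.exp_le_exp.2
            have h3 := DD_ge hα hx
            have h4 : η ^ 2 ≤ (x - α) ^ 2 := by
              rw [← sq_abs (x - α)]; gcongr
            have h5 : l * (2 * η ^ 2) ≤ l * DD α x := mul_le_mul_of_nonneg_left (by linarith) hl
            have h6 : 0 ≤ l * δ * DD α x := mul_nonneg (by positivity) (DD_nonneg hα hx)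
            linarith
          have := EE_nonneg (l := l) (F := F) (α + (x - α) / s)
          simp only [chi, indicator_of_mem hx]
          linarith
      · simp only [EE_of_notMem hx]
        exact add_nonneg (EE_nonneg _) (mul_nonneg (Real.exp_pos _).le (chi_nonneg x))
    rw [MeasureTheory.integral_add hus (chi_integrable.const_mul _),
      MeasureTheory.integral_const_mul, chi_integral] at h2
    rw [e0]; linarith
  · have h1 : II (l * (1 - δ)) (DD α) ≤ II l (DD α) / (1 - δ) := by
      have h1d : 0 < 1 - δ := by linarith
      have h1 := II_scale (l := l * (1 - δ)) (c := 1 / (1 - δ)) hα (by positivity)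
        ((one_le_div h1d).2 (by linarith))
      have e : l * (1 - δ) * (1 / (1 - δ)) = l := by field_simp
      rw [e] at h1
      have e2 : 1 / (1 - δ) * II l (DD α) = II l (DD α) / (1 - δ) := by ring
      rwa [e2] at h1
    have h1d : 0 ≤ 1 - δ := by linarith
    have hcs := scale_integrable chi_integrable hs α
    set T := Real.exp (-l * (m * (2 * (η / s) ^ 2)))
    have h2 : ∫ x, EE l F (α + (x - α) / s) ≤
        ∫ x, (EE (l * (1 - δ)) (DD α) x + T * chi (α + (x - α) / s)) := by
      apply MeasureTheory.integral_mono hus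
        ((DDE_integrable hα (by positivity)).add (hcs.const_mul _))
      intro x
      change EE l F (α + (x - α) / s) ≤ EE (l * (1 - δ)) (DD α) x + T * chi (α + (x - α) / s)
      have hT : 0 ≤ T * chi (α + (x - α) / s) := mul_nonneg (Real.exp_pos _).le (chi_nonneg _)
      by_cases hx : α + (x - α) / s ∈ Ioo (0:ℝ) 1
      · simp only [EE_of_mem hx]
        rcases le_or_gt (|x - α|) η with hxη | hxη
        · have hx' := hin x hx hxη
          obtain ⟨g1, g2, g3⟩ := hloc x hx' hxη
          rw [EE_of_mem hx']
          have : Real.exp (-l * F (α + (x - α) / s)) ≤ Real.exp (-(l * (1 - δ)) * DD α x) := by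
            apply Real.exp_le_exp.2
            have := mul_le_mul_of_nonneg_left g2 hl
            linarith
          linarith
        · have : Real.exp (-l * F (α + (x - α) / s)) ≤ T := by
            apply Real.exp_le_exp.2
            have h3 := DD_ge hα hx
            have h4 : (η / s) ^ 2 ≤ (α + (x - α) / s - α) ^ 2 := by
              rw [add_sub_cancel_left, ← sq_abs ((x - α) / s), abs_div, abs_of_pos hs]; gcongr
            have h5 : m * (2 * (η / s) ^ 2) ≤ F (α + (x - α) / s) :=
              (mul_le_mul_of_nonneg_left (by linarith) hm.le).trans (hFm _ hx)
            have := mul_le_mul_of_nonneg_left h5 hl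
            linarith
          have := EE_nonneg (l := l * (1 - δ)) (F := DD α) x
          simp only [chi, indicator_of_mem hx]
          linarith
      · simp only [EE_of_notMem hx]
        exact add_nonneg (EE_nonneg _) hT
    rw [MeasureTheory.integral_add (DDE_integrable hα (by positivity)) (hcs.const_mul _),
      MeasureTheory.integral_const_mul, scale_integral chi hs α, chi_integral] at h2
    rw [e0]
    unfold II at h1 ⊢
    linarith

/-- A uniform class of perturbations. -/
structure Cls (m M B L : ℝ) (f f1 f2 : ℝ → ℝ) : Prop where
  d1 : ∀ x, HasDerivAt f (f1 x) x
  d2 : ∀ x, HasDerivAt f1 (f2 x) x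
  bd : ∀ x ∈ Icc (0:ℝ) 1, |f2 x| ≤ B
  lo : ∀ x ∈ Icc (0:ℝ) 1, m ≤ 1 + x * (1 - x) * f2 x
  hi : ∀ x ∈ Icc (0:ℝ) 1, 1 + x * (1 - x) * f2 x ≤ M
  lip : ∀ x ∈ Icc (0:ℝ) 1, ∀ y ∈ Icc (0:ℝ) 1,
    |(1 + x * (1 - x) * f2 x) - (1 + y * (1 - y) * f2 y)| ≤ L * |x - y|

theorem Cls.meas {m M B L : ℝ} {f f1 f2 : ℝ → ℝ} (h : Cls m M B L f f1 f2) (α : ℝ) :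
    Measurable (FF f f1 α) :=
  FF_measurable α (continuous_iff_continuousAt.2 fun x => (h.d1 x).continuousAt)
    (continuous_iff_continuousAt.2 fun x => (h.d2 x).continuousAt)

/-- pointwise form of the scaled comparison for the class -/
theorem Cls.comp {m M B L : ℝ} {f f1 f2 : ℝ → ℝ} (h : Cls m M B L f f1 f2) {α a b s η : ℝ}
    (hα : α ∈ Icc (0:ℝ) 1) (hs : 0 < s)
    (H : ∀ y ∈ Ioo (0:ℝ) 1, |y - α| ≤ η → ∀ z, z = α + (y - α) / s → z ∈ Ioo (0:ℝ) 1 ∧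
      a * (s ^ 2 * (z * (1 - z))) ≤ (1 + z * (1 - z) * f2 z) * (y * (1 - y)) ∧
      (1 + z * (1 - z) * f2 z) * (y * (1 - y)) ≤ b * (s ^ 2 * (z * (1 - z))))
    {x : ℝ} (hx : x ∈ Ioo (0:ℝ) 1) (hxη : |x - α| ≤ η) :
    a * DD α x ≤ FF f f1 α (α + (x - α) / s) ∧ FF f f1 α (α + (x - α) / s) ≤ b * DD α x := by
  constructor
  · refine PH_le hα hs ((PH_DD hα).smul a) (PH_FF hα h.d1 h.d2) (fun y hy hyη => ?_) hx hxη
    obtain ⟨h1, h2, h3⟩ := H y hy hyη _ rfl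
    refine ⟨h1, ?_⟩
    set z := α + (y - α) / s
    have p1 : 0 < y * (1 - y) := mul_pos hy.1 (sub_pos.2 hy.2)
    have p2 : 0 < z * (1 - z) := mul_pos h1.1 (sub_pos.2 h1.2)
    have e : (1 / (z * (1 - z)) + f2 z) / s ^ 2
      = (1 + z * (1 - z) * f2 z) / (s ^ 2 * (z * (1 - z))) := by
      have := h1.1.ne'
      have : 1 - z ≠ 0 := (sub_pos.2 h1.2).ne'
      field_simp
    rw [e, mul_one_div, div_le_div_iff₀ p1 (by positivity)]
    exact h2
  · refine PH_ge hα hs ((PH_DD hα).smul b) (PH_FF hα h.d1 h.d2) (fun y hy hyη => ?_) hx hxη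
    obtain ⟨h1, h2, h3⟩ := H y hy hyη _ rfl
    refine ⟨h1, ?_⟩
    set z := α + (y - α) / s
    have p1 : 0 < y * (1 - y) := mul_pos hy.1 (sub_pos.2 hy.2)
    have p2 : 0 < z * (1 - z) := mul_pos h1.1 (sub_pos.2 h1.2)
    have e : (1 / (z * (1 - z)) + f2 z) / s ^ 2
      = (1 + z * (1 - z) * f2 z) / (s ^ 2 * (z * (1 - z))) := by
      have := h1.1.ne'
      have : 1 - z ≠ 0 := (sub_pos.2 h1.2).ne'
      field_simp
    rw [e, mul_one_div, div_le_div_iff₀ (by positivity) p1]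
    exact h3

theorem Cls.bounds {m M B L : ℝ} {f f1 f2 : ℝ → ℝ} (h : Cls m M B L f f1 f2) {α : ℝ}
    (hα : α ∈ Icc (0:ℝ) 1) {x : ℝ} (hx : x ∈ Ioo (0:ℝ) 1) :
    m * DD α x ≤ FF f f1 α x ∧ FF f f1 α x ≤ M * DD α x := by
  have := h.comp (a := m) (b := M) (s := 1) (η := 1) hα one_pos (fun y hy _ z hz => by
    have e : z = y := by rw [hz]; ring
    subst e
    have p1 : 0 ≤ z * (1 - z) := (mul_pos hy.1 (sub_pos.2 hy.2)).le
    refine ⟨hy, ?_, ?_⟩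
    · rw [one_pow, one_mul]
      exact mul_le_mul_of_nonneg_right (h.lo z (Ioo_subset_Icc_self hy)) p1
    · rw [one_pow, one_mul]
      exact mul_le_mul_of_nonneg_right (h.hi z (Ioo_subset_Icc_self hy)) p1) hx (abs_sub_le_one hα hx)
  simpa using this

set_option maxHeartbeats 1000000 in
theorem Cls.loc_cmp {m M B L δ : ℝ} (hm : 0 < m) (hm1 : m ≤ 1) (hM : 1 ≤ M) (hB : 0 ≤ B) (hL : 0 ≤ L)
    (hδ : 0 < δ) (hδ1 : δ ≤ 1 / 2) :
    ∃ η > 0, ∀ f f1 f2 : ℝ → ℝ, Cls m M B L f f1 f2 → ∀ α ∈ Icc (0:ℝ) 1, ∃ s, m ≤ s ∧ s ≤ M ∧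
      |√(1 + α * (1 - α) * f2 α) / s - 1| ≤ δ ∧
      (∀ x ∈ Ioo (0:ℝ) 1, |x - α| ≤ η → α + (x - α) / s ∈ Ioo (0:ℝ) 1 ∧
      (1 - δ) * DD α x ≤ FF f f1 α (α + (x - α) / s) ∧
        FF f f1 α (α + (x - α) / s) ≤ (1 + δ) * DD α x) ∧
      (∀ x, α + (x - α) / s ∈ Ioo (0:ℝ) 1 → |x - α| ≤ η → x ∈ Ioo (0:ℝ) 1) := by
  set κ := δ / (4 * (B + 1)) with hκ
  have hκ0 : 0 < κ := by positivity
  have hκB : 4 * (B + 1) * κ = δ := by rw [hκ]; field_simp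
  have hκ1 : κ ≤ 1 / 8 := by nlinarith [mul_nonneg hB hκ0.le]
  set ξ := δ * m * κ / (8 * (L + 2 * M)) with hξ
  have hξ0 : 0 < ξ := by positivity
  have hξe : 8 * (L + 2 * M) * ξ = δ * m * κ := by rw [hξ]; field_simp
  have hdm : δ * m ≤ 1 := by nlinarith
  have hξκ : 16 * ξ ≤ κ := by
    have : δ * m * κ ≤ 1 * κ := mul_le_mul_of_nonneg_right hdm hκ0.le
    nlinarith [mul_nonneg hL hξ0.le, mul_le_mul_of_nonneg_right hM hξ0.le]
  have hη0 : 0 < m * ξ := by positivity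
  have hηξ : m * ξ ≤ ξ := by nlinarith
  refine ⟨m * ξ, hη0, fun f f1 f2 h α hα => ?_⟩
  have hlo := h.lo α hα
  have hhi := h.hi α hα
  set H := 1 + α * (1 - α) * f2 α with hH
  have hH0 : 0 < H := by linarith
  by_cases hint : κ ≤ α ∧ α ≤ 1 - κ
  · have hs2 : √H ^ 2 = H := Real.sq_sqrt hH0.le
    have hsm : m ≤ √H := Real.le_sqrt_of_sq_le (by nlinarith)
    have hsM : √H ≤ M := Real.sqrt_le_iff.2 ⟨by linarith, by nlinarith⟩
    have hs0 : 0 < √H := by linarith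
    have hz : ∀ y, |y - α| ≤ m * ξ → |(y - α) / √H| ≤ ξ := by
      intro y hy
      rw [abs_div, abs_of_pos hs0, div_le_iff₀ hs0]
      nlinarith
    have hzm : ∀ y, |y - α| ≤ m * ξ → α + (y - α) / √H ∈ Ioo (0:ℝ) 1 := by
      intro y hy
      have := abs_le.1 (hz y hy)
      constructor <;> linarith [hint.1, hint.2, this.1, this.2]
    refine ⟨√H, hsm, hsM, by rw [div_self hs0.ne']; simpa using hδ.le, fun x hx hxη => ⟨hzm x hxη, ?_⟩, ?_⟩
    · refine h.comp hα hs0 (fun y hy hyη z hze => ?_) hx hxη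
      have hz1 := hz y hyη
      have hz2 := hzm y hyη
      rw [← hze] at hz2
      have hzα : |z - α| ≤ ξ := by rw [hze, add_sub_cancel_left]; exact hz1
      have hz3 := abs_le.1 hzα
      have hpz : κ / 4 ≤ z * (1 - z) := by
        nlinarith [mul_nonneg (by linarith [hint.1] : 0 ≤ z - κ / 2) (by linarith [hint.2] : 0 ≤ 1 - z - κ / 2)]
      have hpy1 : y * (1 - y) ≤ 1 := by nlinarith [sq_nonneg (1 - 2 * y)]
      have hpy0 : 0 < y * (1 - y) := mul_pos hy.1 (sub_pos.2 hy.2)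
      have hl1 := h.lip z (Ioo_subset_Icc_self hz2) α hα
      rw [← hH] at hl1
      set Z := 1 + z * (1 - z) * f2 z
      have hl2 : |Z - H| ≤ L * ξ := hl1.trans (mul_le_mul_of_nonneg_left hzα hL)
      have hyz : |y - z| ≤ 2 * ξ := by
        have : y - z = (y - α) - (z - α) := by ring
        rw [this]
        refine (abs_sub _ _).trans ?_
        linarith
      have hpd : |y * (1 - y) - z * (1 - z)| ≤ 2 * ξ := by
        have e : y * (1 - y) - z * (1 - z) = (y - z) * (1 - y - z) := by ring
        rw [e, abs_mul]
        have : |1 - y - z| ≤ 1 := by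
          rw [abs_le]; constructor <;> linarith [hy.1, hy.2, hz2.1, hz2.2]
        nlinarith [abs_nonneg (y - z)]
      have key : |Z * (y * (1 - y)) - H * (z * (1 - z))| ≤ δ * (H * (z * (1 - z))) := by
        have e : Z * (y * (1 - y)) - H * (z * (1 - z)) =
          (Z - H) * (y * (1 - y)) + H * (y * (1 - y) - z * (1 - z)) := by ring
        rw [e]
        have b1 : |(Z - H) * (y * (1 - y))| ≤ L * ξ := by
          rw [abs_mul, abs_of_pos hpy0]
          nlinarith [abs_nonneg (Z - H)]
        have b2 : |H * (y * (1 - y) - z * (1 - z))| ≤ M * (2 * ξ) := by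
          rw [abs_mul, abs_of_pos hH0]
          gcongr
        have b3 : δ * (m * (κ / 4)) ≤ δ * (H * (z * (1 - z))) := by gcongr
        have b4 : 0 ≤ δ * m * κ := by positivity
        refine (abs_add_le _ _).trans ?_
        linarith
      have := abs_le.1 key
      rw [hs2]
      exact ⟨hz2, by linarith, by linarith⟩
    · intro x _ hx
      have := abs_le.1 hx
      constructor <;> linarith [hint.1, hint.2]
  · have hnear : ∀ y ∈ Icc (0:ℝ) 1, |y - α| ≤ m * ξ → |(1 + y * (1 - y) * f2 y) - 1| ≤ δ := by
      intro y hy hyα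
      have h1 := abs_le.1 hyα
      have hp : y * (1 - y) ≤ 2 * κ := by
        by_cases hc : κ ≤ α
        · have : 1 - κ < α := by
            by_contra hcc; exact hint ⟨hc, not_lt.1 hcc⟩
          nlinarith [hy.1, hy.2]
        · nlinarith [hy.1, hy.2]
      have hp0 : 0 ≤ y * (1 - y) := mul_nonneg hy.1 (sub_nonneg.2 hy.2)
      rw [add_sub_cancel_left, abs_mul, abs_of_nonneg hp0]
      calc y * (1 - y) * |f2 y| ≤ 2 * κ * B := by
            gcongr; exact h.bd y hy
        _ ≤ δ := by nlinarith
    refine ⟨1, hm1, hM, ?_, fun x hx hxη => ⟨by simpa using hx, ?_⟩, fun x hx _ => by simpa using hx⟩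
    · have h1 := abs_le.1 (hnear α hα (by simpa using hη0.le))
      rw [← hH] at h1
      rw [div_one, abs_le]
      constructor
      · have : 1 - δ ≤ √H := Real.le_sqrt_of_sq_le (by nlinarith)
        linarith
      · have : √H ≤ 1 + δ := Real.sqrt_le_iff.2 ⟨by linarith, by nlinarith⟩
        linarith
    · refine h.comp hα one_pos (fun y hy hyη z hz => ?_) hx hxη
      have e : z = y := by rw [hz]; ring
      subst e
      have p1 : 0 ≤ z * (1 - z) := (mul_pos hy.1 (sub_pos.2 hy.2)).le
      have h1 := abs_le.1 (hnear z (Ioo_subset_Icc_self hy) hyη)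
      rw [one_pow, one_mul]
      exact ⟨hy, mul_le_mul_of_nonneg_right (by linarith) p1,
        mul_le_mul_of_nonneg_right (by linarith) p1⟩

theorem tail_small {M θ δ : ℝ} (hM : 1 ≤ M) (hθ : 0 < θ) (hδ : 0 < δ) :
    ∃ l₀ : ℝ, 1 ≤ l₀ ∧ ∀ l, l₀ ≤ l → M * Real.exp (-l * θ) ≤ δ * (1 / (6 * l)) := by
  refine ⟨max 1 (12 * M / (δ * θ ^ 2)), le_max_left _ _, fun l hl => ?_⟩
  have h1 : 1 ≤ l := (le_max_left _ _).trans hl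
  have h2 : 12 * M / (δ * θ ^ 2) ≤ l := (le_max_right _ _).trans hl
  rw [div_le_iff₀ (by positivity)] at h2
  have h3 := Real.quadratic_le_exp_of_nonneg (x := l * θ) (by positivity)
  have h4 : (l * θ) ^ 2 / 2 ≤ Real.exp (l * θ) := by
    have : 0 ≤ l * θ := by positivity
    linarith
  have e : -l * θ = -(l * θ) := by ring
  rw [e, Real.exp_neg, ← div_eq_mul_inv, mul_one_div, div_le_div_iff₀ (Real.exp_pos _) (by positivity)]
  refine le_trans ?_ (mul_le_mul_of_nonneg_left h4 hδ.le)
  nlinarith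

/-- Uniform asymptotics over the class. -/
theorem Cls.asymp {m M B L δ : ℝ} (hm : 0 < m) (hm1 : m ≤ 1) (hM : 1 ≤ M) (hB : 0 ≤ B) (hL : 0 ≤ L)
    (hδ : 0 < δ) (hδ1 : δ ≤ 1 / 2) :
    ∃ l₀ : ℝ, 1 ≤ l₀ ∧ ∀ l, l₀ ≤ l → ∀ f f1 f2 : ℝ → ℝ, Cls m M B L f f1 f2 →
      ∀ α ∈ Icc (0:ℝ) 1,
      |√(1 + α * (1 - α) * f2 α) * (II l (FF f f1 α) / II l (DD α)) - 1| ≤ 6 * δ := by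
  obtain ⟨η, hη, hloc⟩ := Cls.loc_cmp hm hm1 hM hB hL hδ hδ1
  obtain ⟨l₀, hl₀, htail⟩ := tail_small (θ := m * (2 * (η / M) ^ 2)) hM (by positivity) hδ
  refine ⟨l₀, hl₀, fun l hl f f1 f2 h α hα => ?_⟩
  obtain ⟨s, hsm, hsM, hs1, hs2, hs3⟩ := hloc f f1 f2 h α hα
  have hs0 : 0 < s := by linarith
  have hl1 : 1 ≤ l := hl₀.trans hl
  have hl0 : 0 ≤ l := by linarith
  obtain ⟨k1, k2⟩ := II_local hα hl0 (h.meas α) hm hδ (by linarith) hs0 hη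
    (fun x hx => (h.bounds hα hx).1) hs2 hs3
  have ht := htail l hl
  have hI := II_lower hα hl1
  have hIp := II_pos hα hl1
  set I0 := II l (DD α)
  set J := II l (FF f f1 α)
  have ht' : M * Real.exp (-l * (m * (2 * (η / M) ^ 2))) ≤ δ * I0 :=
    ht.trans (mul_le_mul_of_nonneg_left hI hδ.le)
  have t1 : Real.exp (-l * (2 * η ^ 2)) ≤ δ * I0 := by
    refine le_trans ?_ ht'
    have : Real.exp (-l * (2 * η ^ 2)) ≤ Real.exp (-l * (m * (2 * (η / M) ^ 2))) := by
      apply Real.exp_le_exp.2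
      have : m * (2 * (η / M) ^ 2) ≤ 1 * (2 * η ^ 2) := by
        gcongr; exact div_le_self hη.le hM
      have := mul_le_mul_of_nonneg_left this hl0
      linarith
    nlinarith [Real.exp_pos (-l * (2 * η ^ 2))]
  have t2 : s * Real.exp (-l * (m * (2 * (η / s) ^ 2))) ≤ δ * I0 := by
    refine le_trans ?_ ht'
    gcongr ?_ * Real.exp ?_
    have : m * (2 * (η / M) ^ 2) ≤ m * (2 * (η / s) ^ 2) := by gcongr
    have := mul_le_mul_of_nonneg_left this hl0
    linarith
  have c1 : (1 - δ) * I0 ≤ I0 / (1 + δ) := by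
    rw [le_div_iff₀ (by linarith)]
    nlinarith [mul_nonneg hIp.le (sq_nonneg δ)]
  have c2 : I0 / (1 - δ) ≤ (1 + 2 * δ) * I0 := by
    rw [div_le_iff₀ (by linarith)]
    nlinarith [mul_nonneg hIp.le (mul_nonneg hδ.le (by linarith : 0 ≤ 1 - 2 * δ))]
  set r := J / I0 with hr
  have r1 : 1 - 2 * δ ≤ s * r := by
    rw [hr, ← mul_div_assoc, le_div_iff₀ hIp]; linarith
  have r2 : s * r ≤ 1 + 3 * δ := by
    rw [hr, ← mul_div_assoc, div_le_iff₀ hIp]; linarith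
  set q := √(1 + α * (1 - α) * f2 α) / s with hq
  have e : √(1 + α * (1 - α) * f2 α) * r = q * (s * r) := by
    rw [hq]; field_simp
  rw [e]
  have hq' := abs_le.1 hs1
  have : 0 ≤ s * r := by linarith
  rw [abs_le]
  constructor
  · nlinarith
  · nlinarith

theorem Cls.mono {m M B L m' M' B' L' : ℝ} {f f1 f2 : ℝ → ℝ} (h : Cls m M B L f f1 f2)
    (hm : m' ≤ m) (hM : M ≤ M') (hB : B ≤ B') (hL : L ≤ L') : Cls m' M' B' L' f f1 f2 :=
  ⟨h.d1, h.d2, fun x hx => (h.bd x hx).trans hB, fun x hx => hm.trans (h.lo x hx),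
    fun x hx => (h.hi x hx).trans hM, fun x hx y hy => (h.lip x hx y hy).trans
      (mul_le_mul_of_nonneg_right hL (abs_nonneg _))⟩

theorem Cls.comb {m M B L t : ℝ} {f f1 f2 g g1 g2 : ℝ → ℝ} (h : Cls m M B L f f1 f2)
    (h' : Cls m M B L g g1 g2) (ht : t ∈ Icc (0:ℝ) 1) :
    Cls m M B L (fun x => (1 - t) * f x + t * g x) (fun x => (1 - t) * f1 x + t * g1 x)
      (fun x => (1 - t) * f2 x + t * g2 x) := by
  have ht0 := ht.1
  have ht1 : 0 ≤ 1 - t := sub_nonneg.2 ht.2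
  refine ⟨fun x => ((h.d1 x).const_mul _).add ((h'.d1 x).const_mul _),
    fun x => ((h.d2 x).const_mul _).add ((h'.d2 x).const_mul _), fun x hx => ?_, fun x hx => ?_,
    fun x hx => ?_, fun x hx y hy => ?_⟩
  · refine (abs_add_le _ _).trans ?_
    rw [abs_mul, abs_mul, abs_of_nonneg ht0, abs_of_nonneg ht1]
    have := mul_le_mul_of_nonneg_left (h.bd x hx) ht1
    have := mul_le_mul_of_nonneg_left (h'.bd x hx) ht0
    linarith
  · have := mul_le_mul_of_nonneg_left (h.lo x hx) ht1
    have := mul_le_mul_of_nonneg_left (h'.lo x hx) ht0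
    linarith
  · have := mul_le_mul_of_nonneg_left (h.hi x hx) ht1
    have := mul_le_mul_of_nonneg_left (h'.hi x hx) ht0
    linarith
  · have e : (1 + x * (1 - x) * ((1 - t) * f2 x + t * g2 x)) -
        (1 + y * (1 - y) * ((1 - t) * f2 y + t * g2 y)) =
        (1 - t) * ((1 + x * (1 - x) * f2 x) - (1 + y * (1 - y) * f2 y)) +
        t * ((1 + x * (1 - x) * g2 x) - (1 + y * (1 - y) * g2 y)) := by ring
    rw [e]
    refine (abs_add_le _ _).trans ?_
    rw [abs_mul, abs_mul, abs_of_nonneg ht0, abs_of_nonneg ht1]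
    have := mul_le_mul_of_nonneg_left (h.lip x hx y hy) ht1
    have := mul_le_mul_of_nonneg_left (h'.lip x hx y hy) ht0
    linarith

theorem Cls.of_smooth {f : ℝ → ℝ} (hf : ContDiff ℝ (⊤ : ℕ∞) f)
    (hpos : ∀ x ∈ Icc (0:ℝ) 1, 0 < 1 + x * (1 - x) * deriv (deriv f) x) :
    ∃ m M B L, 0 < m ∧ m ≤ 1 ∧ 1 ≤ M ∧ 0 ≤ B ∧ 0 ≤ L ∧
      Cls m M B L f (deriv f) (deriv (deriv f)) := by
  have c1 := (contDiff_infty_iff_deriv.1 hf)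
  have c2 := (contDiff_infty_iff_deriv.1 c1.2)
  set f2 := deriv (deriv f)
  set H : ℝ → ℝ := fun x => 1 + x * (1 - x) * f2 x with hH
  have hHs : ContDiff ℝ (⊤ : ℕ∞) H := by
    have := c2.2
    fun_prop
  have hHd := contDiff_infty_iff_deriv.1 hHs
  have hne : (Icc (0:ℝ) 1).Nonempty := ⟨0, by simp⟩
  obtain ⟨a, ha, hamin⟩ := isCompact_Icc.exists_isMinOn hne hHs.continuous.continuousOn
  obtain ⟨b, hb, hbmax⟩ := isCompact_Icc.exists_isMaxOn hne hHs.continuous.continuousOn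
  obtain ⟨B, hB⟩ := (isCompact_Icc (a := (0:ℝ)) (b := 1)).exists_bound_of_continuousOn
    c2.2.continuous.continuousOn
  obtain ⟨L, hL⟩ := (isCompact_Icc (a := (0:ℝ)) (b := 1)).exists_bound_of_continuousOn
    hHd.2.continuous.continuousOn
  have h0 : (0:ℝ) ∈ Icc (0:ℝ) 1 := by simp
  have hH0 : H 0 = 1 := by simp [hH]
  refine ⟨H a, H b, B, L, hpos a ha, ?_, ?_, (norm_nonneg _).trans (hB 0 h0),
    (norm_nonneg _).trans (hL 0 h0), ⟨fun x => (c1.1 x).hasDerivAt, fun x => (c2.1 x).hasDerivAt,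
    fun x hx => hB x hx, fun x hx => hamin hx, fun x hx => hbmax hx, fun x hx y hy => ?_⟩⟩
  · rw [← hH0]; exact hamin h0
  · rw [← hH0]; exact hbmax h0
  · exact Convex.norm_image_sub_le_of_norm_deriv_le (fun x _ => hHd.1 x) hL (convex_Icc 0 1) hy hx

theorem GP_deriv {x : ℝ} (hx : x ∈ Ioo (0:ℝ) 1) :
    HasDerivAt GP (Real.log x - Real.log (1 - x)) x := by
  have h0 : x ≠ 0 := hx.1.ne'
  have h1 : 1 - x ≠ 0 := (sub_pos.2 hx.2).ne'
  have e1 := (hasDerivAt_id x).mul (Real.hasDerivAt_log h0)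
  have e2 := ((hasDerivAt_id x).const_sub 1).mul (((hasDerivAt_id x).const_sub 1).log h1)
  refine (e1.add e2).congr_deriv ?_
  simp only [id]
  field_simp
  ring

theorem G_deriv2 {f f1 f2 : ℝ → ℝ} (h1 : ∀ x, HasDerivAt f (f1 x) x)
    (h2 : ∀ x, HasDerivAt f1 (f2 x) x) {x : ℝ} (hx : x ∈ Ioo (0:ℝ) 1) :
    iteratedDeriv 2 (fun y => GP y + f y) x = 1 / (x * (1 - x)) + f2 x := by
  have e : iteratedDeriv 2 (fun y => GP y + f y) = deriv (deriv (fun y => GP y + f y)) := by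
    rw [iteratedDeriv_succ, iteratedDeriv_one]
  rw [e]
  have hev : deriv (fun y => GP y + f y) =ᶠ[nhds x]
      fun y => Real.log y - Real.log (1 - y) + f1 y := by
    filter_upwards [isOpen_Ioo.mem_nhds hx] with y hy
    exact ((GP_deriv hy).add (h1 y)).deriv
  rw [hev.deriv_eq]
  have h0 : x ≠ 0 := hx.1.ne'
  have h1' : 1 - x ≠ 0 := (sub_pos.2 hx.2).ne'
  have e2 := ((Real.hasDerivAt_log h0).sub (((hasDerivAt_id x).const_sub 1).log h1')).add (h2 x)
  refine HasDerivAt.deriv (e2.congr_deriv ?_)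
  simp only [id]
  field_simp
  ring

theorem Qnorm_eq {f f1 : ℝ → ℝ} (h1 : ∀ x, HasDerivAt f (f1 x) x) (N : ℕ) (α : ℝ) :
    Qnorm (fun y => GP y + f y) N α = 2 * Real.pi * II N (FF f f1 α) := by
  unfold Qnorm II EE
  rw [MeasureTheory.integral_indicator measurableSet_Ioo,
    intervalIntegral.integral_of_le zero_le_one, MeasureTheory.integral_Ioc_eq_integral_Ioo]
  congr 1
  apply MeasureTheory.setIntegral_congr_fun measurableSet_Ioo
  intro x hx
  have : Phase (fun y => GP y + f y) α x = FF f f1 α x := by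
    unfold Phase
    have hd : deriv (fun y => GP y + f y) x = Real.log x - Real.log (1 - x) + f1 x :=
      ((GP_deriv hx).add (h1 x)).deriv
    rw [hd]
    unfold FF DD GP
    ring
  simp only [this]

theorem geom_bounds {lo hi a b t : ℝ} (hlo : 0 < lo) (ha : lo ≤ a) (ha' : a ≤ hi) (hb : lo ≤ b)
    (hb' : b ≤ hi) (ht : t ∈ Icc (0:ℝ) 1) : lo ≤ a ^ (1 - t) * b ^ t ∧ a ^ (1 - t) * b ^ t ≤ hi := by
  have ht0 := ht.1
  have ht1 : 0 ≤ 1 - t := sub_nonneg.2 ht.2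
  have key : ∀ c : ℝ, 0 < c → c ^ (1 - t) * c ^ t = c := by
    intro c hc
    rw [← Real.rpow_add hc]; simp
  constructor
  · calc lo = lo ^ (1 - t) * lo ^ t := (key lo hlo).symm
      _ ≤ _ := mul_le_mul (Real.rpow_le_rpow hlo.le ha ht1) (Real.rpow_le_rpow hlo.le hb ht0)
        (by positivity) (Real.rpow_nonneg (by linarith) _)
  · calc _ ≤ hi ^ (1 - t) * hi ^ t := mul_le_mul (Real.rpow_le_rpow (by linarith) ha' ht1)
          (Real.rpow_le_rpow (by linarith) hb' ht0)
          (Real.rpow_nonneg (by linarith) _) (Real.rpow_nonneg (by linarith) _)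
      _ = hi := key hi (by linarith)

theorem geom_mul {a b c d t : ℝ} (ha : 0 < a) (hb : 0 < b) (hc : 0 < c) (hd : 0 < d) :
    (a * c) ^ (1 - t) * (b * d) ^ t = (a ^ (1 - t) * b ^ t) * (c ^ (1 - t) * d ^ t) := by
  rw [Real.mul_rpow ha.le hc.le, Real.mul_rpow hb.le hd.le]; ring

theorem Omg_eq {f0 f1 : ℝ → ℝ} {t α m M B L : ℝ} {g1 g2 : ℝ → ℝ} (hα : α ∈ Icc (0:ℝ) 1)
    (hm : 0 < m)
    (h : Cls m M B L (fun x => (1 - t) * f0 x + t * f1 x) g1 g2) :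
    Omg f0 f1 t α = (√(1 + α * (1 - α) * g2 α))⁻¹ := by
  unfold Omg
  split_ifs with hc
  · rcases hc with rfl | rfl <;> simp
  · push Not at hc
    have hi : α ∈ Ioo (0:ℝ) 1 := ⟨lt_of_le_of_ne hα.1 (Ne.symm hc.1), lt_of_le_of_ne hα.2 hc.2⟩
    have e1 : iteratedDeriv 2 (Gt f0 f1 t) α = 1 / (α * (1 - α)) + g2 α := G_deriv2 h.d1 h.d2 hi
    have e2 : iteratedDeriv 2 GP α = 1 / (α * (1 - α)) := by
      have := G_deriv2 (f := fun _ => 0) (f1 := fun _ => 0) (f2 := fun _ => 0)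
        (fun x => hasDerivAt_const _ _) (fun x => hasDerivAt_const _ _) hi
      simpa using this
    have h0 : α ≠ 0 := hi.1.ne'
    have h1 : 1 - α ≠ 0 := (sub_pos.2 hi.2).ne'
    have hH : 0 < 1 + α * (1 - α) * g2 α := hm.trans_le (h.lo α hα)
    have e3 : 1 / (α * (1 - α)) / (1 / (α * (1 - α)) + g2 α) = (1 + α * (1 - α) * g2 α)⁻¹ := by
      have : 1 / (α * (1 - α)) + g2 α = (1 + α * (1 - α) * g2 α) / (α * (1 - α)) := by
        field_simp
      rw [this]
      field_simp
    rw [e1, e2, e3, ← Real.sqrt_eq_rpow, Real.sqrt_inv]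

theorem bergman_cp1_bounds_and_convergence_of_R
    (f0 f1 : ℝ → ℝ) (hf0 : ContDiff ℝ (⊤ : ℕ∞) f0) (hf1 : ContDiff ℝ (⊤ : ℕ∞) f1)
    (hG0 : ∀ x ∈ Set.Ioo (0:ℝ) 1, 0 < iteratedDeriv 2 (Gt f0 f1 0) x)
    (hG1 : ∀ x ∈ Set.Ioo (0:ℝ) 1, 0 < iteratedDeriv 2 (Gt f0 f1 1) x) :
    (∃ C : ℝ, 0 < C ∧
      ∀ N : ℕ, 1 ≤ N → ∀ t ∈ Set.Icc (0:ℝ) 1, ∀ α ∈ Set.Icc (0:ℝ) 1,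
        1 / C ≤ Rcal f0 f1 N t α ∧ Rcal f0 f1 N t α ≤ C) ∧
    (∀ ε : ℝ, 0 < ε → ∃ N₀ : ℕ, ∀ N : ℕ, N₀ ≤ N →
      ∀ t ∈ Set.Icc (0:ℝ) 1, ∀ α ∈ Set.Icc (0:ℝ) 1,
        |Rcal f0 f1 N t α -
          Omg f0 f1 t α / ((Omg f0 f1 0 α) ^ (1 - t) * (Omg f0 f1 1 α) ^ t)| < ε) := by
  have hpos : ∀ (f : ℝ → ℝ), ContDiff ℝ (⊤ : ℕ∞) f →
      (∀ x ∈ Set.Ioo (0:ℝ) 1, 0 < iteratedDeriv 2 (fun y => GP y + f y) x) →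
      ∀ x ∈ Icc (0:ℝ) 1, 0 < 1 + x * (1 - x) * deriv (deriv f) x := by
    intro f hf hG x hx
    have c1 := (contDiff_infty_iff_deriv.1 hf)
    have c2 := (contDiff_infty_iff_deriv.1 c1.2)
    rcases eq_or_lt_of_le hx.1 with h0 | h0
    · rw [← h0]; norm_num
    rcases eq_or_lt_of_le hx.2 with h1 | h1
    · rw [h1]; norm_num
    have := hG x ⟨h0, h1⟩
    rw [G_deriv2 (fun x => (c1.1 x).hasDerivAt) (fun x => (c2.1 x).hasDerivAt) ⟨h0, h1⟩] at this
    have hp : 0 < x * (1 - x) := mul_pos h0 (sub_pos.2 h1)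
    have h2 := mul_pos hp this
    rwa [mul_add, mul_one_div_cancel hp.ne'] at h2
  have eG0 : Gt f0 f1 0 = fun y => GP y + f0 y := by funext y; simp [Gt]
  have eG1 : Gt f0 f1 1 = fun y => GP y + f1 y := by funext y; simp [Gt]
  rw [eG0] at hG0
  rw [eG1] at hG1
  obtain ⟨m0, M0, B0, L0, a1, a2, a3, a4, a5, C0⟩ := Cls.of_smooth hf0 (hpos f0 hf0 hG0)
  obtain ⟨m1, M1, B1, L1, b1, b2, b3, b4, b5, C1⟩ := Cls.of_smooth hf1 (hpos f1 hf1 hG1)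
  obtain ⟨m, hm, hm1, hmm0, hmm1⟩ : ∃ m : ℝ, 0 < m ∧ m ≤ 1 ∧ m ≤ m0 ∧ m ≤ m1 :=
    ⟨min m0 m1, lt_min a1 b1, (min_le_left _ _).trans a2, min_le_left _ _, min_le_right _ _⟩
  obtain ⟨M, hM, hMM0, hMM1⟩ : ∃ M : ℝ, 1 ≤ M ∧ M0 ≤ M ∧ M1 ≤ M :=
    ⟨max M0 M1, a3.trans (le_max_left _ _), le_max_left _ _, le_max_right _ _⟩
  obtain ⟨B, hB, hBB0, hBB1⟩ : ∃ B : ℝ, 0 ≤ B ∧ B0 ≤ B ∧ B1 ≤ B :=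
    ⟨max B0 B1, a4.trans (le_max_left _ _), le_max_left _ _, le_max_right _ _⟩
  obtain ⟨L, hL, hLL0, hLL1⟩ : ∃ L : ℝ, 0 ≤ L ∧ L0 ≤ L ∧ L1 ≤ L :=
    ⟨max L0 L1, a5.trans (le_max_left _ _), le_max_left _ _, le_max_right _ _⟩
  have D0 := C0.mono hmm0 hMM0 hBB0 hLL0
  have D1 := C1.mono hmm1 hMM1 hBB1 hLL1
  -- the family
  set F : ℝ → ℝ → ℝ := fun t x => (1 - t) * f0 x + t * f1 x with hFd
  set F1 : ℝ → ℝ → ℝ := fun t x => (1 - t) * deriv f0 x + t * deriv f1 x with hF1d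
  set F2 : ℝ → ℝ → ℝ := fun t x => (1 - t) * deriv (deriv f0) x + t * deriv (deriv f1) x with hF2d
  have hC : ∀ t ∈ Icc (0:ℝ) 1, Cls m M B L (F t) (F1 t) (F2 t) := fun t ht => D0.comb D1 ht
  have m0' : (0:ℝ) ∈ Icc (0:ℝ) 1 := by simp
  have m1' : (1:ℝ) ∈ Icc (0:ℝ) 1 := by simp
  -- normalized ratios
  set r : ℕ → ℝ → ℝ → ℝ := fun N t α => II N (FF (F t) (F1 t) α) / II N (DD α) with hr
  have hrb : ∀ N : ℕ, 1 ≤ N → ∀ t ∈ Icc (0:ℝ) 1, ∀ α ∈ Icc (0:ℝ) 1,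
      1 / M ≤ r N t α ∧ r N t α ≤ 1 / m := by
    intro N hN t ht α hα
    have hN' : (1:ℝ) ≤ N := by exact_mod_cast hN
    have h1 := II_bounds (l := N) hα (by linarith) ((hC t ht).meas α) hm hm1 hM
      (fun x hx => (hC t ht).bounds hα hx)
    have hp := II_pos hα hN'
    constructor
    · rw [hr, le_div_iff₀ hp, one_div_mul_eq_div]; exact h1.1
    · rw [hr, div_le_iff₀ hp, one_div_mul_eq_div]; exact h1.2
  have hR : ∀ N : ℕ, 1 ≤ N → ∀ t ∈ Icc (0:ℝ) 1, ∀ α ∈ Icc (0:ℝ) 1,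
      Rcal f0 f1 N t α = r N t α / ((r N 0 α) ^ (1 - t) * (r N 1 α) ^ t) := by
    intro N hN t ht α hα
    have hN' : (1:ℝ) ≤ N := by exact_mod_cast hN
    have hp := II_pos hα hN'
    have hQ : ∀ s ∈ Icc (0:ℝ) 1, Qnorm (Gt f0 f1 s) N α = r N s α * (2 * Real.pi * II N (DD α)) := by
      intro s hs
      have : Qnorm (Gt f0 f1 s) N α = 2 * Real.pi * II N (FF (F s) (F1 s) α) :=
        Qnorm_eq (hC s hs).d1 N α
      rw [this, hr]
      field_simp
    have hc : 0 < 2 * Real.pi * II N (DD α) := by positivity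
    have hMp : 0 < 1 / M := by positivity
    unfold Rcal
    rw [hQ t ht, hQ 0 m0', hQ 1 m1', geom_mul (hMp.trans_le (hrb N hN 0 m0' α hα).1)
      (hMp.trans_le (hrb N hN 1 m1' α hα).1) hc hc, ← Real.rpow_add hc]
    simp only [sub_add_cancel, Real.rpow_one]
    rw [mul_div_mul_right _ _ hc.ne']
  have hMp : 0 < 1 / M := by positivity
  constructor
  · refine ⟨M / m, by positivity, fun N hN t ht α hα => ?_⟩
    rw [hR N hN t ht α hα]
    obtain ⟨u1, u2⟩ := hrb N hN t ht α hα
    obtain ⟨v1, v2⟩ := geom_bounds hMp (hrb N hN 0 m0' α hα).1 (hrb N hN 0 m0' α hα).2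
      (hrb N hN 1 m1' α hα).1 (hrb N hN 1 m1' α hα).2 ht
    have hv := hMp.trans_le v1
    have e1 : 1 / (M / m) * (1 / m) = 1 / M := by field_simp
    have e2 : M / m * (1 / M) = 1 / m := by field_simp
    constructor
    · rw [le_div_iff₀ hv]
      calc _ ≤ 1 / (M / m) * (1 / m) := by gcongr
        _ ≤ _ := by rw [e1]; exact u1
    · rw [div_le_iff₀ hv]
      calc _ ≤ M / m * (1 / M) := by rw [e2]; exact u2
        _ ≤ _ := by gcongr
  · intro ε hε
    -- the limit, bounded by `K`
    set K := M / m with hK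
    have hK0 : 0 < K := by positivity
    obtain ⟨δ, hδ, hδ1, hδε⟩ : ∃ δ : ℝ, 0 < δ ∧ δ ≤ 1 / 12 ∧ K * (24 * δ) < ε := by
      refine ⟨min (1 / 12) (ε / (48 * K)), by positivity, min_le_left _ _, ?_⟩
      have : min (1 / 12) (ε / (48 * K)) ≤ ε / (48 * K) := min_le_right _ _
      calc K * (24 * min (1 / 12) (ε / (48 * K))) ≤ K * (24 * (ε / (48 * K))) := by gcongr
        _ = ε / 2 := by field_simp; norm_num
        _ < ε := by linarith
    obtain ⟨l₀, hl₀, has⟩ := Cls.asymp hm hm1 hM hB hL hδ (by linarith)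
    refine ⟨⌈l₀⌉₊, fun N hN t ht α hα => ?_⟩
    have hNl : l₀ ≤ N := Nat.ceil_le.1 hN
    have hN1 : 1 ≤ N := by exact_mod_cast hl₀.trans hNl
    have hH : ∀ s ∈ Icc (0:ℝ) 1, m ≤ √(1 + α * (1 - α) * F2 s α) ∧ √(1 + α * (1 - α) * F2 s α) ≤ M := by
      intro s hs
      have h1 := (hC s hs).lo α hα
      have h2 := (hC s hs).hi α hα
      exact ⟨Real.le_sqrt_of_sq_le (by nlinarith), Real.sqrt_le_iff.2 ⟨by linarith, by nlinarith⟩⟩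
    set S : ℝ → ℝ := fun s => √(1 + α * (1 - α) * F2 s α) with hS
    have hO : ∀ s ∈ Icc (0:ℝ) 1, Omg f0 f1 s α = (S s)⁻¹ := fun s hs => Omg_eq hα hm (hC s hs)
    have hOb : ∀ s ∈ Icc (0:ℝ) 1, 1 / M ≤ (S s)⁻¹ ∧ (S s)⁻¹ ≤ 1 / m := by
      intro s hs
      obtain ⟨h1, h2⟩ := hH s hs
      rw [← one_div]
      exact ⟨one_div_le_one_div_of_le (hm.trans_le h1) h2, one_div_le_one_div_of_le hm h1⟩
    set w : ℝ → ℝ := fun s => S s * r N s α with hw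
    have hwb : ∀ s ∈ Icc (0:ℝ) 1, 1 - 6 * δ ≤ w s ∧ w s ≤ 1 + 6 * δ := by
      intro s hs
      have := abs_le.1 (has N hNl (F s) (F1 s) (F2 s) (hC s hs) α hα)
      constructor
      · linarith [this.1]
      · linarith [this.2]
    have hrw : ∀ s ∈ Icc (0:ℝ) 1, r N s α = (S s)⁻¹ * w s := by
      intro s hs
      have : S s ≠ 0 := (hm.trans_le (hH s hs).1).ne'
      rw [hw]; field_simp
    have h6 : 0 < 1 - 6 * δ := by linarith
    rw [hR N hN1 t ht α hα, hO t ht, hO 0 m0', hO 1 m1', hrw t ht, hrw 0 m0', hrw 1 m1',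
      geom_mul (hMp.trans_le (hOb 0 m0').1) (hMp.trans_le (hOb 1 m1').1)
        (h6.trans_le (hwb 0 m0').1) (h6.trans_le (hwb 1 m1').1)]
    obtain ⟨v1, v2⟩ := geom_bounds hMp (hOb 0 m0').1 (hOb 0 m0').2 (hOb 1 m1').1 (hOb 1 m1').2 ht
    obtain ⟨z1, z2⟩ := geom_bounds h6 (hwb 0 m0').1 (hwb 0 m0').2 (hwb 1 m1').1 (hwb 1 m1').2 ht
    obtain ⟨o1, o2⟩ := hOb t ht
    obtain ⟨w1, w2⟩ := hwb t ht
    set V := (S 0)⁻¹ ^ (1 - t) * (S 1)⁻¹ ^ t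
    set Z := w 0 ^ (1 - t) * w 1 ^ t
    have hV : 0 < V := hMp.trans_le v1
    have hZ : 0 < Z := h6.trans_le z1
    have e : (S t)⁻¹ * w t / (V * Z) - (S t)⁻¹ / V = ((S t)⁻¹ / V) * ((w t - Z) / Z) := by
      field_simp
    have hl : 0 ≤ (S t)⁻¹ / V := div_nonneg (hMp.le.trans o1) hV.le
    have hlK : (S t)⁻¹ / V ≤ K := by
      rw [div_le_iff₀ hV]
      have e2 : K * (1 / M) = 1 / m := by rw [hK]; field_simp
      calc _ ≤ K * (1 / M) := by rw [e2]; exact o2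
        _ ≤ _ := by gcongr
    have hq : |(w t - Z) / Z| ≤ 24 * δ := by
      rw [abs_div, abs_of_pos hZ, div_le_iff₀ hZ, abs_le]
      constructor <;> nlinarith
    rw [e, abs_mul, abs_of_nonneg hl]
    calc _ ≤ K * (24 * δ) := by gcongr
      _ < ε := hδε
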